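/- Stability of the Lie splitting for semi-linear problems (Lemma A.1): Assume the weak CFL condition 7 c_inv c_M τ < 3 h and 1/(2τ) > C, where C := max{2L_A, √(8L_M), L_{A_Γ}, 2√(L_{M_Γ})}. Then for every n ≥ 1 the iterates of the semi-linear Lie splitting satisfy τ Σ_{k=1}^{n} ( 1 − c_M h (4 + 4 τ² L_M) − (c_{α,M} τ h + c_A τ h⁻¹)(1 + 4 τ² L_A) ) ‖∂_τ p^{k+1} − ∂_τ p^{k}‖_{M_Γ}² ≤ e^{2 tⁿ C} [ ‖u¹ − u⁰‖_{A + η_Ω M}² + ‖p¹ − p⁰‖_{A_Γ + η_Γ M_Γ}² + 2τ ‖∂_τ p¹ − ∂_τ p⁰‖_{M₂₂}² + 2 L τ² Σ_{k=0}^{n−1} e^{−2 t^{k} C} τ ], where L := L_Ω + L_Γ and ‖x‖_{A + η_Ω M}² := xᵀ(A + η_Ω M)x, ‖q‖_{A_Γ + η_Γ M_Γ}² := qᵀ(A_Γ + η_Γ M_Γ)q. -/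

import Mathlib

open Matrix Finset

/-- The squared "energy" norm `‖x‖_S² = xᵀ S x` induced by a matrix `S`. -/
noncomputable def vecNormSq {ι : Type*} [Fintype ι] (S : Matrix ι ι ℝ) (x : ι → ℝ) : ℝ :=
  x ⬝ᵥ S.mulVec x

/-- The constant `η` from Lemma A.1: `η := √(2 L_M)` if `L_A < √(2 L_M)`, and
`η := L_A + √(L_A² − 2 L_M)` otherwise. -/
noncomputable def etaConst (LA LM : ℝ) : ℝ :=
  if LA < Real.sqrt (2 * LM) then Real.sqrt (2 * LM) else LA + Real.sqrt (LA ^ 2 - 2 * LM)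

/-!
The differences `u` of the bulk iterates and `q` of the boundary iterates solve the scheme with a
differenced source, and the splitting error enters through the second boundary difference
`a = q' - q`, extended by zero into the bulk. Testing with the increments of `u` and `q` gives an
energy balance, except that the stiffness coupling `A (ι a) (u' - u)` has no sign. It is absorbed by
the corrected energy `E - σ * A (ι q) u`, with `σ` the zeroth order weight on the boundary. The
correction is at most the fraction `(K + σ) / 4` of `E`, where `K` bounds the stiffness of zero
extensions by the boundary mass.

In one step this functional grows at most by the `[2/2]` Padé approximant of `exp (2 * z)`,
`z = τ * C`, and it loses a multiple of the boundary mass of `a`; a discrete Gronwall argument sums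
these losses. The inequalities behind a step are, up to explicit squares, affine in the weights
`μ, ν ∈ [0, 1 / 2]`, so they are proved at the end points and interpolated.
-/

open LinearMap (BilinForm)

theorem quadratic_nonneg_of_sq_le_mul {V : Type*} [AddCommGroup V] [Module ℝ V]
    {S : BilinForm ℝ V} (hS : S.IsPosSemidef) {p r t : ℝ} (hp : 0 < p)
    (hr : r ^ 2 ≤ p * t) (x y : V) : 0 ≤ p * S x x - 2 * r * S x y + t * S y y := by
  have square := hS.nonneg (p • x - r • y)
  have rest := mul_nonneg (sub_nonneg.2 hr) (hS.nonneg y)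
  simp only [map_sub, map_smul, LinearMap.sub_apply, LinearMap.smul_apply, smul_eq_mul,
    hS.isSymm.eq y x] at square
  have : 0 ≤ p * (p * S x x - 2 * r * S x y + t * S y y) := by linear_combination square + rest
  exact nonneg_of_mul_nonneg_right this hp

/-! ### The Padé approximant of the exponential -/

/-- The numerator `b` and the denominator `e` of the `[2/2]` Padé approximant of `exp (2 * z)`,
together with their mean `m`, for a step `z ∈ [0, 1/2]`. -/
structure IsPade (z m b e : ℝ) : Prop where
  nonneg : 0 ≤ z
  le_half : z ≤ 1 / 2
  mean_eq : m = 1 + z ^ 2 / 3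
  num_eq : b = m + z
  den_eq : e = m - z

namespace IsPade

variable {z m b e : ℝ} (h : IsPade z m b e)

include h

theorem mean_pos : 0 < m := by
  rw [h.mean_eq]; positivity

theorem one_le_num : 1 ≤ b := by
  rw [h.num_eq, h.mean_eq]; nlinarith [h.nonneg, sq_nonneg z]

theorem den_pos : 0 < e := by
  rw [h.den_eq, h.mean_eq]; nlinarith [h.le_half, sq_nonneg z]

theorem num_le_den_mul_exp : b ≤ e * Real.exp (2 * z) := by
  have hz := h.nonneg
  have exp_taylor := Real.sum_le_exp_of_nonneg (x := 2 * z) (by positivity) 6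
  refine le_trans ?_ (mul_le_mul_of_nonneg_left exp_taylor h.den_pos.le)
  rw [h.num_eq, h.den_eq, h.mean_eq]
  norm_num [Finset.sum_range_succ, Nat.factorial]
  nlinarith [h.le_half, pow_nonneg hz 5, pow_nonneg hz 6, pow_nonneg hz 7]

theorem mean_sq_le : m ^ 2 ≤ (2 - z + 2 * z ^ 2 / 3) * (1 / 2 + z / 4 + z ^ 2 / 3) := by
  rw [h.mean_eq]
  nlinarith [sq_nonneg z, mul_nonneg (sq_nonneg z) (sub_nonneg.2 h.le_half), sq_nonneg (z ^ 2)]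

theorem boundary_source_weight_le : 2 - z + 2 * z ^ 2 / 3 ≤ 2 - z / b := by
  have hb : 0 < b := zero_lt_one.trans_le h.one_le_num
  rw [le_sub_iff_add_le', ← le_sub_iff_add_le, div_le_iff₀ hb, h.num_eq, h.mean_eq]
  have hw := sub_nonneg.2 h.le_half
  nlinarith [pow_nonneg h.nonneg 2, mul_nonneg (pow_nonneg h.nonneg 2) hw,
    mul_nonneg (pow_nonneg h.nonneg 3) hw, pow_nonneg h.nonneg 4]

theorem bulk_source_le {φ f A M X ρ : ℝ}
    (young : ∀ s, 2 * s * φ ≤ f + z / 2 * A + ρ ^ 2 / 2 * M + s ^ 2 * X) (hf : 0 ≤ f) :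
    2 * m * φ ≤ 2 * f + z * m / b * A + m / b * ρ ^ 2 * M + m * b / 2 * X := by
  have hm := h.mean_pos
  have hb : 0 < b := zero_lt_one.trans_le h.one_le_num
  have hmb : m / b ≤ 1 := by rw [div_le_one hb, h.num_eq]; linarith [h.nonneg]
  calc 2 * m * φ = 2 * (m / b) * (2 * (b / 2) * φ) := by field_simp
    _ ≤ 2 * (m / b) * (f + z / 2 * A + ρ ^ 2 / 2 * M + (b / 2) ^ 2 * X) := by
      gcongr
      exact young _
    _ = 2 * (m / b) * f + z * m / b * A + m / b * ρ ^ 2 * M + m * b / 2 * X := by field_simp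
    _ ≤ 2 * f + z * m / b * A + m / b * ρ ^ 2 * M + m * b / 2 * X := by gcongr; linarith

theorem boundary_source_le {ψ g A M X σ : ℝ}
    (young : ∀ s, 2 * s * ψ ≤ g + z * A + σ ^ 2 * M + s ^ 2 * X) (hg : 0 ≤ g)
    (hA : 0 ≤ A) (hX : 0 ≤ X) :
    2 * m * ψ ≤ 2 * g + (2 - z / b) * z * A + (2 - z + 2 * z ^ 2 / 3) * σ ^ 2 * M
      + (1 / 2 + z / 4 + z ^ 2 / 3) * X := by
  have hz := h.nonneg
  have hb : 0 < b := zero_lt_one.trans_le h.one_le_num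
  have hc : 0 < 2 - z + 2 * z ^ 2 / 3 := by nlinarith [h.le_half]
  set c := 2 - z + 2 * z ^ 2 / 3
  have hcb : c ≤ 2 - z / b := h.boundary_source_weight_le
  calc 2 * m * ψ = c * (2 * (m / c) * ψ) := by field_simp
    _ ≤ c * (g + z * A + σ ^ 2 * M + (m / c) ^ 2 * X) := by
      gcongr
      exact young _
    _ = c * g + c * z * A + c * σ ^ 2 * M + m ^ 2 / c * X := by field_simp
    _ ≤ 2 * g + (2 - z / b) * z * A + c * σ ^ 2 * M + (1 / 2 + z / 4 + z ^ 2 / 3) * X := by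
      gcongr
      · exact hcb.trans (sub_le_self _ (by positivity))
      · exact (div_le_iff₀' hc).2 h.mean_sq_le

end IsPade

/-! ### One step for a single form -/

section step

variable {V : Type*} [AddCommGroup V] [Module ℝ V] {S : BilinForm ℝ V} {z m b e : ℝ}

/-- What completing the squares in the bulk stiffness terms of one step leaves behind: a form in the
zero extensions `α` of the boundary increment and `Q` of the boundary difference, with the coupling
in the Lyapunov functional weighted by `z * ν`. -/
noncomputable def couplingCost (S : BilinForm ℝ V) (z m b ν : ℝ) (α Q : V) : ℝ :=
  m * z / b * S α α
    + S (m • α - (b * z * ν / 2) • (Q - α)) (m • α - (b * z * ν / 2) • (Q - α)) / b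
    + z * (ν / 2) ^ 2 * S (m • α - z • Q) (m • α - z • Q)

theorem IsPade.bulk_stiffness_step (h : IsPade z m b e) (hS : S.IsPosSemidef) (ν : ℝ)
    (U x α Q : V) :
    z * m / b * S (U - α) (U - α) ≤
      b * (S (U - x) (U - x) - z * ν * S (Q - α) (U - x)) - e * (S U U - z * ν * S Q U)
        + 2 * m * S (U - α) x + couplingCost S z m b ν α Q := by
  have hb : 0 < b := zero_lt_one.trans_le h.one_le_num
  have square₁ := hS.nonneg (b • x - z • U - m • α + (b * z * ν / 2) • (Q - α))
  have square₂ := mul_nonneg h.nonneg (hS.nonneg (U + (ν / 2) • (m • α - z • Q)))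
  rw [← sub_nonneg]
  refine (add_nonneg (div_nonneg square₁ hb.le) square₂).trans_eq ?_
  simp only [couplingCost, map_sub, map_add, map_smul, LinearMap.sub_apply, LinearMap.add_apply,
    LinearMap.smul_apply, smul_eq_mul, hS.isSymm.eq x U, hS.isSymm.eq α U, hS.isSymm.eq Q U,
    hS.isSymm.eq α x, hS.isSymm.eq Q x, hS.isSymm.eq Q α]
  obtain ⟨-, -, -, rfl, rfl⟩ := h
  field_simp
  ring

theorem IsPade.boundary_stiffness_step (h : IsPade z m b e) (hS : S.IsPosSemidef) (q a : V) :
    (2 - z / b) * z * S q q ≤ b * S (q - a) (q - a) - e * S q q + 2 * m * S q a := by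
  have hb : 0 < b := zero_lt_one.trans_le h.one_le_num
  have square := hS.nonneg (b • a - z • q)
  rw [← sub_nonneg]
  refine (div_nonneg square hb.le).trans_eq ?_
  obtain ⟨-, -, -, rfl, rfl⟩ := h
  simp only [map_sub, map_smul, LinearMap.sub_apply, LinearMap.smul_apply, smul_eq_mul,
    hS.isSymm.eq a q]
  field_simp
  ring

theorem IsPade.mass_form_nonneg_zero (h : IsPade z m b e) (hS : S.IsPosSemidef) (x α : V) :
    0 ≤ (4 * m * b - m ^ 2 - m * b ^ 2) * S x x - 2 * (m * (2 * b)) * S x α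
      + ((7 / 2 - 4 * z / 5 - 2 * e) * (2 * b)) * S α α := by
  obtain ⟨hz, hz', rfl, rfl, rfl⟩ := h
  apply quadratic_nonneg_of_sq_le_mul hS
  · nlinarith [pow_nonneg hz 2, pow_nonneg hz 3, pow_nonneg hz 4, pow_nonneg hz 5]
  · have h2b : 0 ≤ 2 * (1 + z ^ 2 / 3 + z) := by positivity
    refine (mul_le_mul_of_nonneg_right (?_ : (1 + z ^ 2 / 3) ^ 2 * (2 * (1 + z ^ 2 / 3 + z)) ≤ _)
      h2b).trans_eq' (by ring) |>.trans_eq (mul_assoc _ _ _)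
    nlinarith [pow_nonneg hz 2, pow_nonneg hz 3, pow_nonneg hz 4, pow_nonneg hz 5,
      pow_nonneg hz 6]

theorem IsPade.mass_form_nonneg_half (h : IsPade z m b e) (hS : S.IsPosSemidef) (x α : V) :
    0 ≤ (4 * m * b - m ^ 2 - m * b ^ 2 + b ^ 2 * z - 2 / 3 * b ^ 3) * S x x
      - 2 * ((m - b * z / 6) * (2 * b)) * S x α
      + ((7 / 2 - 4 * z / 5 - 2 * e - z ^ 2 / 3) * (2 * b)) * S α α := by
  obtain ⟨hz, hz', rfl, rfl, rfl⟩ := h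
  have hw : 0 ≤ 1 / 2 - z := by linarith
  apply quadratic_nonneg_of_sq_le_mul hS
  · nlinarith [pow_nonneg hz 2, pow_nonneg hz 3, pow_nonneg hz 4, pow_nonneg hz 5]
  · have h2b : 0 ≤ 2 * (1 + z ^ 2 / 3 + z) := by positivity
    refine (mul_le_mul_of_nonneg_right (?_ : (1 + z ^ 2 / 3 - (1 + z ^ 2 / 3 + z) * z / 6) ^ 2
      * (2 * (1 + z ^ 2 / 3 + z)) ≤ _) h2b).trans_eq' (by ring) |>.trans_eq (mul_assoc _ _ _)
    nlinarith [pow_nonneg hz 2, pow_nonneg hz 3, pow_nonneg hz 4, pow_nonneg hz 5,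
      pow_nonneg hz 6, mul_nonneg hz hw, mul_nonneg (pow_nonneg hz 2) hw,
      mul_nonneg (pow_nonneg hz 3) hw, mul_nonneg (pow_nonneg hz 4) hw]

theorem IsPade.bulk_mass_step (h : IsPade z m b e) (hS : S.IsPosSemidef) {μ : ℝ} (hμ : 0 ≤ μ)
    (hμ' : μ ≤ 1 / 2) (U x α α' : V) :
    m / b * (z * μ) ^ 2 * S (U - α) (U - α) ≤
      z * μ * (b * S (U - x) (U - x) - e * S U U) + 2 * b * S α' α' - 2 * e * S α α
        + 2 * m * S (x - α + α') x - m * b / 2 * S x x + (7 / 2 - 4 * z / 5) * S α α := by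
  have hb : 0 < b := zero_lt_one.trans_le h.one_le_num
  -- The remaining form in `x` and `α` is affine in `μ`, so its two end points suffice.
  have forms := add_nonneg
    (mul_nonneg (by linarith : 0 ≤ 1 - 2 * μ) (h.mass_form_nonneg_zero hS x α))
    (mul_nonneg (by linarith : 0 ≤ 2 * μ) (h.mass_form_nonneg_half hS x α))
  have square₁ := hS.nonneg ((2 * b) • α' + m • x)
  have square₂ := mul_nonneg hμ (hS.nonneg (z • U - (1 / 3 : ℝ) • ((2 * b) • x - z • α)))
  have square₃ : 0 ≤ (μ / 2 - m / b * μ ^ 2) * S (z • (U - α)) (z • (U - α)) := by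
    have : m / b ≤ 1 := by rw [div_le_one hb, h.num_eq]; linarith [h.nonneg]
    exact mul_nonneg (by nlinarith) (hS.nonneg _)
  rw [← sub_nonneg]
  refine (add_nonneg (add_nonneg (div_nonneg (add_nonneg forms square₁) (by positivity :
    0 ≤ 2 * b)) (mul_nonneg (by norm_num : (0 : ℝ) ≤ 3 / 2) square₂)) square₃).trans_eq ?_
  simp only [map_sub, map_add, map_smul, LinearMap.sub_apply, LinearMap.add_apply,
    LinearMap.smul_apply, smul_eq_mul, hS.isSymm.eq x U, hS.isSymm.eq α U, hS.isSymm.eq α x,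
    hS.isSymm.eq α' x]
  obtain ⟨-, -, -, rfl, rfl⟩ := h
  field_simp
  ring

variable {H : BilinForm ℝ V} {K B ν : ℝ}

/-- What remains on the boundary after one step at `ν = 1 / 2`, as a quadratic form in the
increment `x = a` and the scaled state `y = z • q`. The dissipation factor
`(1 - K - B) * (1 + (K + z / 2) / 4)` is replaced by a free parameter `r`, which makes the form
affine in `(K, B, r)`. -/
noncomputable def boundaryForm (H : BilinForm ℝ V) (z m b e K B r : ℝ) (x y : V) : ℝ :=
  (3 / 2 - z / 4 + z ^ 2 / 3 + b * z / 2 - K * (m + m * z / 2 + b * z ^ 2 / 16 + z * m ^ 2 / 16)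
      - B * (7 / 8 - z / 5) - r * e) * H x x
    - 2 * (b / 2 - K * ((m + z * (b + m) / 4) / 4)) * H x y
    + (1 / 2 + z / 4 - z ^ 2 / 6 - K * ((b + z) / 16)) * H y y

theorem IsPade.boundaryForm_nonneg_vertices (h : IsPade z m b e) (hH : H.IsPosSemidef)
    (x y : V) :
    0 ≤ boundaryForm H z m b e 0 0 (1 + z / 8) x y ∧ 0 ≤ boundaryForm H z m b e 0 1 0 x y ∧
      0 ≤ boundaryForm H z m b e 1 0 0 x y ∧
      0 ≤ boundaryForm H z m b e (1 / 2) 0 (5 / 8 + z / 16) x y := by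
  obtain ⟨hz, hz', rfl, rfl, rfl⟩ := h
  have hw : 0 ≤ 1 / 2 - z := by linarith
  refine ⟨?_, ?_, ?_, ?_⟩ <;> apply quadratic_nonneg_of_sq_le_mul hH <;>
  nlinarith [pow_nonneg hz 2, pow_nonneg hz 3, mul_nonneg hz hw,
    mul_nonneg (pow_nonneg hz 2) hw, mul_nonneg (pow_nonneg hz 3) hw,
    mul_nonneg (pow_nonneg hz 4) hw]

theorem IsPade.boundaryForm_nonneg (h : IsPade z m b e) (hH : H.IsPosSemidef)
    (hK : 0 ≤ K) (hB : 0 ≤ B) (hKB : K + B ≤ 1) (x y : V) :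
    0 ≤ boundaryForm H z m b e K B ((1 - K - B) * (1 + (K + z / 2) / 4)) x y := by
  obtain ⟨v₁, v₂, v₃, v₄⟩ := h.boundaryForm_nonneg_vertices hH x y
  have hrest : 0 ≤ 1 - K - B := by linarith
  have w₁ := mul_nonneg (mul_nonneg hrest (by linarith : 0 ≤ 1 - K)) v₁
  have w₂ := mul_nonneg hB v₂
  have w₃ := mul_nonneg (mul_nonneg hK (add_nonneg hK hB)) v₃
  have w₄ := mul_nonneg (mul_nonneg (mul_nonneg two_pos.le hrest) hK) v₄
  refine (add_nonneg (add_nonneg w₁ w₂) (add_nonneg w₃ w₄)).trans_eq ?_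
  unfold boundaryForm
  ring

theorem IsPade.boundary_mass_step (h : IsPade z m b e) (hH : H.IsPosSemidef)
    (hK : 0 ≤ K) (hB : 0 ≤ B) (hKB : K + B ≤ 1) (hν : 0 ≤ ν) (hν' : ν ≤ 1 / 2) (a q : V) :
    e * ((1 - K - B) * (1 + (K + z * ν) / 4) * H a a)
        + (2 - z + 2 * z ^ 2 / 3) * (z * ν) ^ 2 * H q q
        + K * couplingCost H z m b ν a q + (7 / 8 - z / 5) * (B * H a a) ≤
      z * ν * (b * H (q - a) (q - a) - e * H q q)
        + (2 * m - (1 / 2 + z / 4 + z ^ 2 / 3)) * H a a := by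
  have hz := h.nonneg
  have hb : 0 < b := zero_lt_one.trans_le h.one_le_num
  have start : 0 ≤ (3 / 2 - z / 4 + z ^ 2 / 3 - K * m - B * (7 / 8 - z / 5)
      - (1 - K - B) * e * (1 + K / 4)) * H a a := by
    refine mul_nonneg ?_ (hH.nonneg a)
    have hr : 0 ≤ 1 - K - B := by linarith
    have hm := h.mean_eq
    have he := h.den_eq
    have hz' := h.le_half
    nlinarith [mul_nonneg hr (by nlinarith : 0 ≤ 3 / 2 - z / 4 + z ^ 2 / 3 - e * (1 + K / 4)),
      mul_nonneg hK (by linarith : 0 ≤ 1 / 2 - z / 4), mul_nonneg hB hz]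
  -- Apart from the term `quadratic`, the difference of the two sides is affine in `ν`.
  have finish := h.boundaryForm_nonneg hH hK hB hKB a (z • q)
  have quadratic : 0 ≤ (2 - z + 2 * z ^ 2 / 3) * H (z • q) (z • q)
      + K * (b / 4 * H (z • (q - a)) (z • (q - a))
        + z / 4 * H (m • a - z • q) (m • a - z • q)) := by
    have : 0 ≤ 2 - z + 2 * z ^ 2 / 3 := by nlinarith [h.le_half]
    have := hH.nonneg (z • q)
    have := hH.nonneg (z • (q - a))
    have := hH.nonneg (m • a - z • q)
    positivity
  rw [← sub_nonneg]
  refine (add_nonneg (add_nonneg (mul_nonneg (by linarith : 0 ≤ 1 - 2 * ν) start)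
    (mul_nonneg (by linarith : 0 ≤ 2 * ν) finish))
    (mul_nonneg (by nlinarith : 0 ≤ ν / 2 - ν ^ 2) quadratic)).trans_eq ?_
  simp only [couplingCost, boundaryForm, map_sub, map_smul, LinearMap.sub_apply,
    LinearMap.smul_apply, smul_eq_mul, hH.isSymm.eq q a]
  obtain ⟨-, -, hm, rfl, rfl⟩ := h
  field_simp
  rw [hm]
  ring

end step

/-! ### The Lyapunov functional -/

theorem exists_mul_eq_of_le_mul {z c ρ : ℝ} (hz : 0 ≤ z) (hc : 0 ≤ c) (hρ : 0 ≤ ρ)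
    (h : ρ ≤ z * c) : ∃ μ, 0 ≤ μ ∧ μ ≤ c ∧ ρ = z * μ := by
  rcases hz.eq_or_lt with rfl | hz
  · exact ⟨0, le_rfl, hc, by linarith⟩
  · exact ⟨ρ / z, by positivity, (div_le_iff₀' hz).2 h, by field_simp⟩

theorem add_sum_le_pow_mul_of_add_le {R s : ℝ} {V E : ℕ → ℝ} (hR : 1 ≤ R) (hE : ∀ k, 0 ≤ E k)
    (h : ∀ k, V (k + 1) + E k ≤ R * (V k + s)) (n : ℕ) :
    V n + ∑ k ∈ Finset.range n, E k ≤
      R ^ n * (V 0 + s * ∑ k ∈ Finset.range n, (R ^ k)⁻¹) := by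
  have hR₀ : 0 < R := zero_lt_one.trans_le hR
  induction n with
  | zero => simp
  | succ n ih =>
    have hsum : 0 ≤ ∑ k ∈ Finset.range n, E k := Finset.sum_nonneg fun k _ => hE k
    calc V (n + 1) + ∑ k ∈ Finset.range (n + 1), E k
        ≤ R * (V n + s) + R * ∑ k ∈ Finset.range n, E k := by
          rw [Finset.sum_range_succ]
          nlinarith [h n]
      _ = R * (V n + ∑ k ∈ Finset.range n, E k + s) := by ring
      _ ≤ R * (R ^ n * (V 0 + s * ∑ k ∈ Finset.range n, (R ^ k)⁻¹) + s) := by gcongr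
      _ = R ^ (n + 1) * (V 0 + s * ∑ k ∈ Finset.range (n + 1), (R ^ k)⁻¹) := by
          rw [Finset.sum_range_succ]
          linear_combination -(R * s) * mul_inv_cancel₀ (pow_pos hR₀ n).ne'

/-- The energy forms of a bulk problem on `V` and of a boundary problem on `G`, coupled along the
embedding of boundary values as bulk fields that vanish in the interior. -/
structure CoupledForms (V G : Type*) [AddCommGroup V] [Module ℝ V] [AddCommGroup G]
    [Module ℝ G] where
  stiff : BilinForm ℝ V
  mass : BilinForm ℝ V
  bdryStiff : BilinForm ℝ G
  bdryMass : BilinForm ℝ G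
  incl : G →ₗ[ℝ] V
  stiff_psd : stiff.IsPosSemidef
  mass_psd : mass.IsPosSemidef
  bdryStiff_psd : bdryStiff.IsPosSemidef
  bdryMass_psd : bdryMass.IsPosSemidef

namespace CoupledForms

variable {V G : Type*} [AddCommGroup V] [Module ℝ V] [AddCommGroup G] [Module ℝ G]
  (F : CoupledForms V G) {z m b e K B ρ σ μ ν : ℝ}

/-- The energy of first differences `u`, `q` and of the second boundary difference `a`, with
zeroth order weights `ρ` in the bulk and `σ` on the boundary. -/
noncomputable def energy (ρ σ : ℝ) (u : V) (q a : G) : ℝ :=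
  F.stiff u u + ρ * F.mass u u + F.bdryStiff q q + σ * F.bdryMass q q
    + 2 * F.mass (F.incl a) (F.incl a)

/-- The Lyapunov functional of the splitting: the energy, corrected by the stiffness coupling of
the bulk and the boundary differences. -/
noncomputable def lyapunov (ρ σ : ℝ) (u : V) (q a : G) : ℝ :=
  F.energy ρ σ u q a - σ * F.stiff (F.incl q) u

theorem energy_nonneg (hρ : 0 ≤ ρ) (hσ : 0 ≤ σ) (u : V) (q a : G) : 0 ≤ F.energy ρ σ u q a := by
  have := F.stiff_psd.nonneg u
  have := F.mass_psd.nonneg u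
  have := F.bdryStiff_psd.nonneg q
  have := F.bdryMass_psd.nonneg q
  have := F.mass_psd.nonneg (F.incl a)
  unfold energy
  positivity

theorem abs_coupling_le (hK : 0 ≤ K)
    (hstiff : ∀ a, F.stiff (F.incl a) (F.incl a) ≤ K * F.bdryMass a a) (hσ : 0 ≤ σ)
    (u : V) (q : G) :
    |σ * F.stiff (F.incl q) u| ≤ (K + σ) / 4 * (F.stiff u u + σ * F.bdryMass q q) := by
  have hu := F.stiff_psd.nonneg u
  have hq := F.bdryMass_psd.nonneg q
  refine abs_le_of_sq_le_sq ?_ (by positivity)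
  calc (σ * F.stiff (F.incl q) u) ^ 2
      ≤ σ ^ 2 * (F.stiff (F.incl q) (F.incl q) * F.stiff u u) := by
        rw [mul_pow]
        gcongr
        exact F.stiff.apply_sq_le_of_symm F.stiff_psd.nonneg
          (BilinForm.isSymm_iff.1 F.stiff_psd.isSymm) _ _
    _ ≤ σ ^ 2 * (K * F.bdryMass q q * F.stiff u u) := by
        gcongr
        exact hstiff q
    _ = K * σ * (F.stiff u u * (σ * F.bdryMass q q)) := by ring
    _ ≤ ((K + σ) / 2) ^ 2 * ((F.stiff u u + σ * F.bdryMass q q) / 2) ^ 2 := by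
        gcongr ?_ * ?_ <;> linarith [four_mul_le_pow_two_add K σ,
          four_mul_le_pow_two_add (F.stiff u u) (σ * F.bdryMass q q)]
    _ = ((K + σ) / 4 * (F.stiff u u + σ * F.bdryMass q q)) ^ 2 := by ring

theorem abs_coupling_le_energy (hK : 0 ≤ K)
    (hstiff : ∀ a, F.stiff (F.incl a) (F.incl a) ≤ K * F.bdryMass a a) (hρ : 0 ≤ ρ)
    (hσ : 0 ≤ σ) (u : V) (q a : G) :
    |σ * F.stiff (F.incl q) u| ≤ (K + σ) / 4 * F.energy ρ σ u q a := by
  refine (F.abs_coupling_le hK hstiff hσ u q).trans ?_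
  have := mul_nonneg hρ (F.mass_psd.nonneg u)
  have := F.bdryStiff_psd.nonneg q
  have := F.mass_psd.nonneg (F.incl a)
  have hKσ : 0 ≤ (K + σ) / 4 := by positivity
  exact mul_le_mul_of_nonneg_left (by unfold energy; linarith) hKσ

theorem lyapunov_nonneg (hK : 0 ≤ K)
    (hstiff : ∀ a, F.stiff (F.incl a) (F.incl a) ≤ K * F.bdryMass a a) (hρ : 0 ≤ ρ)
    (hσ : 0 ≤ σ) (hKσ : K + σ ≤ 4) (u : V) (q a : G) : 0 ≤ F.lyapunov ρ σ u q a := by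
  have coupling := (le_abs_self _).trans (F.abs_coupling_le_energy hK hstiff hρ hσ u q a)
  have henergy := F.energy_nonneg hρ hσ u q a
  unfold lyapunov
  nlinarith

theorem lyapunov_le_energy (hK : 0 ≤ K)
    (hstiff : ∀ a, F.stiff (F.incl a) (F.incl a) ≤ K * F.bdryMass a a) (hρ : 0 ≤ ρ)
    (hσ : 0 ≤ σ) (u : V) (q a : G) :
    F.lyapunov ρ σ u q a ≤ (1 + (K + σ) / 4) * F.energy ρ σ u q a := by
  have coupling := (neg_le_abs _).trans (F.abs_coupling_le_energy hK hstiff hρ hσ u q a)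
  unfold lyapunov
  linarith

theorem couplingCost_incl_le (h : IsPade z m b e)
    (hstiff : ∀ a, F.stiff (F.incl a) (F.incl a) ≤ K * F.bdryMass a a) (a q : G) :
    couplingCost F.stiff z m b ν (F.incl a) (F.incl q) ≤
      K * couplingCost F.bdryMass z m b ν a q := by
  have hz := h.nonneg
  have hm := h.mean_pos
  have hb : 0 < b := zero_lt_one.trans_le h.one_le_num
  simp only [couplingCost, ← map_smul, ← map_sub]
  calc _ ≤ m * z / b * (K * F.bdryMass a a)
      + K * F.bdryMass (m • a - (b * z * ν / 2) • (q - a)) (m • a - (b * z * ν / 2) • (q - a)) / b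
      + z * (ν / 2) ^ 2 * (K * F.bdryMass (m • a - z • q) (m • a - z • q)) := by
        gcongr <;> apply hstiff
    _ = _ := by ring

theorem lyapunov_step_source (h : IsPade z m b e) (hK : 0 ≤ K) (hB : 0 ≤ B) (hKB : K + B ≤ 1)
    (hstiff : ∀ a, F.stiff (F.incl a) (F.incl a) ≤ K * F.bdryMass a a)
    (hmass : ∀ a, 4 * F.mass (F.incl a) (F.incl a) ≤ B * F.bdryMass a a)
    (hμ : 0 ≤ μ) (hμ' : μ ≤ 1 / 2) (hν : 0 ≤ ν) (hν' : ν ≤ 1 / 2) {U x : V} {q a a' : G} {s : ℝ}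
    (tested : F.mass (x - F.incl a + F.incl a') x + F.stiff (U - F.incl a) x + F.bdryMass a a
      + F.bdryStiff q a = s) :
    e * (F.lyapunov (z * μ) (z * ν) U q a
        + (1 - K - B) * (1 + (K + z * ν) / 4) * F.bdryMass a a)
      + z * m / b * F.stiff (U - F.incl a) (U - F.incl a)
      + m / b * (z * μ) ^ 2 * F.mass (U - F.incl a) (U - F.incl a)
      + m * b / 2 * F.mass x x
      + (2 - z / b) * z * F.bdryStiff q q
      + (2 - z + 2 * z ^ 2 / 3) * (z * ν) ^ 2 * F.bdryMass q q
      + (1 / 2 + z / 4 + z ^ 2 / 3) * F.bdryMass a a ≤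
    b * F.lyapunov (z * μ) (z * ν) (U - x) (q - a) a' + 2 * m * s := by
  have bulk_stiffness := h.bulk_stiffness_step F.stiff_psd ν U x (F.incl a) (F.incl q)
  have bulk_mass := h.bulk_mass_step F.mass_psd hμ hμ' U x (F.incl a) (F.incl a')
  have bdry_stiffness := h.boundary_stiffness_step F.bdryStiff_psd q a
  have bdry_mass := h.boundary_mass_step F.bdryMass_psd hK hB hKB hν hν' a q
  have cost := F.couplingCost_incl_le (ν := ν) h hstiff a q
  have trace := mul_le_mul_of_nonneg_left (hmass a)
    (by linarith [h.le_half] : 0 ≤ (7 / 8 - z / 5))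
  rw [← map_sub F.incl] at bulk_stiffness
  rw [← tested]
  unfold lyapunov energy
  linarith

/-- What one step of the splitting, from `(u, q, a)` to `(u', q', a')`, provides: the differenced
scheme tested with the increments of `u` and `q`, where `φ` and `ψ` are the tested increments of the
bulk and the boundary source, and the bounds on these that come from Young's inequality with a free
weight `s` and from the Lipschitz conditions. -/
structure IsStep (z ρ σ f g φ ψ : ℝ) (u u' : V) (q q' a a' : G) : Prop where
  increment : q' - q = a'
  tested : F.mass (u' - u - F.incl a' + F.incl a) (u' - u)
    + F.stiff (u' - F.incl a') (u' - u) + F.bdryMass a' a' + F.bdryStiff q' a' = φ + ψ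
  bulk_source (s : ℝ) : 2 * s * φ ≤ f + z / 2 * F.stiff (u' - F.incl a') (u' - F.incl a')
    + ρ ^ 2 / 2 * F.mass (u' - F.incl a') (u' - F.incl a') + s ^ 2 * F.mass (u' - u) (u' - u)
  boundary_source (s : ℝ) : 2 * s * ψ ≤ g + z * F.bdryStiff q' q' + σ ^ 2 * F.bdryMass q' q'
    + s ^ 2 * F.bdryMass a' a'

theorem lyapunov_step (h : IsPade z m b e) (hK : 0 ≤ K) (hB : 0 ≤ B) (hKB : K + B ≤ 1)
    (hstiff : ∀ a, F.stiff (F.incl a) (F.incl a) ≤ K * F.bdryMass a a)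
    (hmass : ∀ a, 4 * F.mass (F.incl a) (F.incl a) ≤ B * F.bdryMass a a)
    (hμ : 0 ≤ μ) (hμ' : μ ≤ 1 / 2) (hν : 0 ≤ ν) (hν' : ν ≤ 1 / 2)
    {f g φ ψ : ℝ} (hf : 0 ≤ f) (hg : 0 ≤ g) {u u' : V} {q q' a a' : G}
    (step : F.IsStep z (z * μ) (z * ν) f g φ ψ u u' q q' a a') :
    F.lyapunov (z * μ) (z * ν) u' q' a'
        + (1 - K - B) * (1 + (K + z * ν) / 4) * F.bdryMass a' a' ≤
      Real.exp (2 * z) * (F.lyapunov (z * μ) (z * ν) u q a + 2 * (f + g)) := by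
  have hz := h.nonneg
  have balance := F.lyapunov_step_source h hK hB hKB hstiff hmass hμ hμ' hν hν' step.tested
  rw [sub_sub_cancel, show q' - a' = q from sub_eq_of_eq_add (by rw [← step.increment]; abel)]
    at balance
  have bulk_source := h.bulk_source_le step.bulk_source hf
  have boundary_source := h.boundary_source_le step.boundary_source hg
    (F.bdryStiff_psd.nonneg q') (F.bdryMass_psd.nonneg a')
  have lyapunov_nonneg : 0 ≤ F.lyapunov (z * μ) (z * ν) u q a :=
    F.lyapunov_nonneg hK hstiff (by positivity) (by positivity) (by nlinarith [h.le_half]) _ _ _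
  refine le_of_mul_le_mul_left ?_ h.den_pos
  calc _ ≤ b * F.lyapunov (z * μ) (z * ν) u q a + 2 * (f + g) := by linarith
    _ ≤ b * (F.lyapunov (z * μ) (z * ν) u q a + 2 * (f + g)) := by nlinarith [h.one_le_num]
    _ ≤ e * Real.exp (2 * z) * (F.lyapunov (z * μ) (z * ν) u q a + 2 * (f + g)) := by
      gcongr
      exact h.num_le_den_mul_exp
    _ = _ := mul_assoc _ _ _

theorem sum_bdryMass_le (hz : 0 ≤ z) (hz' : z ≤ 1 / 2) (hK : 0 ≤ K) (hB : 0 ≤ B)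
    (hstiff : ∀ a, F.stiff (F.incl a) (F.incl a) ≤ K * F.bdryMass a a)
    (hmass : ∀ a, 4 * F.mass (F.incl a) (F.incl a) ≤ B * F.bdryMass a a)
    (hρ : 0 ≤ ρ) (hρ' : ρ ≤ z / 2) (hσ : 0 ≤ σ) (hσ' : σ ≤ z / 2)
    {f g : ℝ} (hf : 0 ≤ f) (hg : 0 ≤ g) {φ ψ : ℕ → ℝ} {u : ℕ → V} {q a : ℕ → G}
    (step : ∀ k, F.IsStep z ρ σ f g (φ k) (ψ k) (u k) (u (k + 1)) (q k) (q (k + 1)) (a k)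
      (a (k + 1))) (n : ℕ) :
    (1 - K - B) * ∑ k ∈ Finset.range n, F.bdryMass (a (k + 1)) (a (k + 1)) ≤
      Real.exp (2 * z) ^ n * (F.energy ρ σ (u 0) (q 0) (a 0)
        + 2 * (f + g) * ∑ k ∈ Finset.range n, (Real.exp (2 * z) ^ k)⁻¹) := by
  have henergy := F.energy_nonneg hρ hσ (u 0) (q 0) (a 0)
  rcases le_total 1 (K + B) with hKB | hKB
  · have hsum : 0 ≤ ∑ k ∈ Finset.range n, F.bdryMass (a (k + 1)) (a (k + 1)) :=
      Finset.sum_nonneg fun k _ => F.bdryMass_psd.nonneg _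
    exact (mul_nonpos_of_nonpos_of_nonneg (by linarith) hsum).trans (by positivity)
  obtain ⟨μ, hμ, hμ', rfl⟩ := exists_mul_eq_of_le_mul hz one_half_pos.le hρ (by linarith)
  obtain ⟨ν, hν, hν', rfl⟩ := exists_mul_eq_of_le_mul hz one_half_pos.le hσ (by linarith)
  have hpade : IsPade z _ _ _ := ⟨hz, hz', rfl, rfl, rfl⟩
  have hsum := add_sum_le_pow_mul_of_add_le
    (V := fun k => F.lyapunov (z * μ) (z * ν) (u k) (q k) (a k))
    (E := fun k => (1 - K - B) * (1 + (K + z * ν) / 4) * F.bdryMass (a (k + 1)) (a (k + 1)))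
    (Real.one_le_exp (by positivity : 0 ≤ 2 * z))
    (fun k => mul_nonneg (mul_nonneg (by linarith) (by positivity)) (F.bdryMass_psd.nonneg _))
    (fun k => F.lyapunov_step hpade hK hB hKB hstiff hmass hμ hμ' hν hν' hf hg (step k)) n
  rw [← Finset.mul_sum] at hsum
  have hlast := F.lyapunov_nonneg hK hstiff hρ hσ (by linarith) (u n) (q n) (a n)
  have hfirst := F.lyapunov_le_energy hK hstiff hρ hσ (u 0) (q 0) (a 0)
  set S := ∑ k ∈ Finset.range n, (Real.exp (2 * z) ^ k)⁻¹
  have hS : 0 ≤ S := by positivity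
  have ht : 0 ≤ (K + z * ν) / 4 := by positivity
  refine le_of_mul_le_mul_left ?_ (by positivity : 0 < 1 + (K + z * ν) / 4)
  calc _ ≤ Real.exp (2 * z) ^ n * (F.lyapunov (z * μ) (z * ν) (u 0) (q 0) (a 0)
        + 2 * (f + g) * S) := by linarith
    _ ≤ Real.exp (2 * z) ^ n * ((1 + (K + z * ν) / 4) * (F.energy (z * μ) (z * ν) (u 0) (q 0) (a 0)
        + 2 * (f + g) * S)) := by
      gcongr
      nlinarith [mul_nonneg ht (by positivity : 0 ≤ 2 * (f + g) * S)]
    _ = _ := by ring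

end CoupledForms

/-! ### The Lie splitting -/

theorem sqrt_two_mul_le_etaConst (LA LM : ℝ) : Real.sqrt (2 * LM) ≤ etaConst LA LM := by
  unfold etaConst
  split_ifs with h
  · exact le_rfl
  · exact (not_lt.1 h).trans (le_add_of_nonneg_right (Real.sqrt_nonneg _))

theorem exp_two_mul_pow (k : ℕ) (τ C : ℝ) :
    Real.exp (2 * (τ * C)) ^ k = Real.exp (2 * (k * τ) * C) := by
  rw [← Real.exp_nat_mul]
  ring_nf

section vecNormSq

variable {ι : Type*} [Fintype ι]

theorem vecNormSq_nonneg {S : Matrix ι ι ℝ} (hS : S.PosSemidef) (x : ι → ℝ) :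
    0 ≤ vecNormSq S x :=
  (hS.dotProduct_mulVec_nonneg x).trans_eq (by rw [star_trivial, vecNormSq])

theorem vecNormSq_smul (S : Matrix ι ι ℝ) (c : ℝ) (x : ι → ℝ) :
    vecNormSq S (c • x) = c ^ 2 * vecNormSq S x := by
  simp only [vecNormSq, mulVec_smul, smul_dotProduct, dotProduct_smul, smul_eq_mul]
  ring

theorem vecNormSq_add_smul (S T : Matrix ι ι ℝ) (c : ℝ) (x : ι → ℝ) :
    vecNormSq (S + c • T) x = vecNormSq S x + c * vecNormSq T x := by
  simp only [vecNormSq, add_mulVec, smul_mulVec, dotProduct_add, dotProduct_smul, smul_eq_mul]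

theorem vecNormSq_add_smul_mono {T : Matrix ι ι ℝ} (hT : T.PosSemidef) (S : Matrix ι ι ℝ)
    {c c' : ℝ} (hc : c ≤ c') (x : ι → ℝ) :
    vecNormSq (S + c • T) x ≤ vecNormSq (S + c' • T) x := by
  rw [vecNormSq_add_smul, vecNormSq_add_smul]
  exact add_le_add_right (mul_le_mul_of_nonneg_right hc (vecNormSq_nonneg hT x)) _

theorem two_mul_dotProduct_le_vecNormSq [DecidableEq ι] {S : Matrix ι ι ℝ} (hS : S.PosDef)
    (s : ℝ) (x f : ι → ℝ) :
    2 * s * (x ⬝ᵥ f) ≤ vecNormSq S⁻¹ f + s ^ 2 * vecNormSq S x := by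
  have hdet : IsUnit S.det := (isUnit_iff_isUnit_det _).1 hS.isUnit
  have hsymm : Sᵀ = S := by simpa using hS.isHermitian.eq
  have square := vecNormSq_nonneg hS.inv.posSemidef (f - s • S *ᵥ x)
  have inv_mulVec : S⁻¹ *ᵥ (S *ᵥ x) = x := by
    rw [mulVec_mulVec, nonsing_inv_mul _ hdet, one_mulVec]
  have cross : (S *ᵥ x) ⬝ᵥ (S⁻¹ *ᵥ f) = x ⬝ᵥ f := by
    rw [← vecMul_transpose, hsymm, ← dotProduct_mulVec, mulVec_mulVec, mul_nonsing_inv _ hdet,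
      one_mulVec]
  simp only [vecNormSq, mulVec_sub, mulVec_smul, inv_mulVec, sub_dotProduct, dotProduct_sub,
    smul_dotProduct, dotProduct_smul, cross, smul_eq_mul, dotProduct_comm f x,
    dotProduct_comm (S *ᵥ x) x] at square ⊢
  linarith

/-- The Lipschitz condition on a source term `f`, measured in the norm dual to that of the mass
matrix `S`, with the seminorm of the stiffness matrix `T` on the right-hand side. -/
def IsSourceLipschitz [DecidableEq ι] (S T : Matrix ι ι ℝ) (f : ℝ → (ι → ℝ) → ι → ℝ)
    (L LT LS : ℝ) : Prop :=
  ∀ t t' u u', vecNormSq S⁻¹ (f t u - f t' u') ≤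
    L * |t - t'| ^ 2 + LT * vecNormSq T (u - u') + LS * vecNormSq S (u - u')

theorem IsSourceLipschitz.two_mul_dotProduct_le [DecidableEq ι] {S T : Matrix ι ι ℝ}
    {f : ℝ → (ι → ℝ) → ι → ℝ} {L LT LS D t t' τ : ℝ} (h : IsSourceLipschitz S T f L LT LS)
    (hS : S.PosDef) (hT : T.PosSemidef) (hLT : LT ≤ D) (ht : |t - t'| = τ) (s : ℝ)
    (x u u' : ι → ℝ) :
    2 * s * (x ⬝ᵥ τ • (f t u - f t' u')) ≤
      L * τ ^ 4 + τ * D * (τ * vecNormSq T (u - u')) + τ ^ 2 * LS * vecNormSq S (u - u')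
        + s ^ 2 * vecNormSq S x := by
  refine (two_mul_dotProduct_le_vecNormSq hS s x _).trans (add_le_add_left ?_ _)
  rw [vecNormSq_smul]
  calc τ ^ 2 * vecNormSq S⁻¹ (f t u - f t' u')
      ≤ τ ^ 2 * (L * τ ^ 2 + LT * vecNormSq T (u - u') + LS * vecNormSq S (u - u')) := by
        rw [← ht]
        gcongr
        exact h t t' u u'
    _ ≤ τ ^ 2 * (L * τ ^ 2 + D * vecNormSq T (u - u') + LS * vecNormSq S (u - u')) := by
        have := vecNormSq_nonneg hT (u - u')
        gcongr
    _ = _ := by ring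

theorem toBilin'_isPosSemidef [DecidableEq ι] {S : Matrix ι ι ℝ} (hS : S.PosSemidef) :
    S.toBilin'.IsPosSemidef where
  eq x y := by
    have hsymm : Sᵀ = S := by simpa using hS.isHermitian.eq
    simp only [toBilin'_apply']
    rw [dotProduct_mulVec, ← mulVec_transpose, hsymm, dotProduct_comm]
  nonneg x := (vecNormSq_nonneg hS x).trans_eq (toBilin'_apply' S x x).symm

theorem toBilin'_self [DecidableEq ι] (S : Matrix ι ι ℝ) (x : ι → ℝ) :
    S.toBilin' x x = vecNormSq S x :=
  toBilin'_apply' S x x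

theorem toBilin'_apply_eq_swap [DecidableEq ι] {S : Matrix ι ι ℝ} (hS : S.PosSemidef)
    (x y : ι → ℝ) : S.toBilin' x y = y ⬝ᵥ S *ᵥ x :=
  ((toBilin'_isPosSemidef hS).isSymm.eq y x).symm.trans (toBilin'_apply' S y x)

end vecNormSq

section zeroExtend

variable {m n : Type*}

/-- The extension of boundary values by zero into the interior. -/
def zeroExtend : (n → ℝ) →ₗ[ℝ] (m ⊕ n → ℝ) where
  toFun := Sum.elim 0
  map_add' a b := by rw [← Sum.elim_add_add, add_zero]
  map_smul' c a := by ext (i | j) <;> simp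

theorem zeroExtend_apply (a : n → ℝ) : zeroExtend a = Sum.elim (0 : m → ℝ) a := rfl

variable [Fintype m] [Fintype n]

theorem dotProduct_zeroExtend (x : m ⊕ n → ℝ) (a : n → ℝ) :
    x ⬝ᵥ zeroExtend a = (x ∘ Sum.inr) ⬝ᵥ a := by
  simp [zeroExtend_apply, dotProduct]

theorem vecNormSq_fromBlocks_zeroExtend (S₁₁ : Matrix m m ℝ) (S₁₂ : Matrix m n ℝ)
    (S₂₁ : Matrix n m ℝ) (S₂₂ : Matrix n n ℝ) (a : n → ℝ) :
    vecNormSq (fromBlocks S₁₁ S₁₂ S₂₁ S₂₂) (zeroExtend a) = vecNormSq S₂₂ a := by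
  simp [zeroExtend_apply, vecNormSq, fromBlocks_mulVec, sumElim_dotProduct_sumElim]

end zeroExtend

section LieSplitting

variable {m n : Type*} [Fintype m] [Fintype n]
  {M A : Matrix (m ⊕ n) (m ⊕ n) ℝ} {MΓ AΓ : Matrix n n ℝ} {τ : ℝ}
  {fΩ : ℝ → (m ⊕ n → ℝ) → m ⊕ n → ℝ} {fΓ : ℝ → (n → ℝ) → n → ℝ}
  {u₁ : ℕ → m → ℝ} {p dtp : ℕ → n → ℝ}

/-- The first difference of the bulk iterates `(u₁ k, p k)`. -/
def bulkIncrement (u₁ : ℕ → m → ℝ) (p : ℕ → n → ℝ) (k : ℕ) : m ⊕ n → ℝ :=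
  Sum.elim (u₁ (k + 1)) (p (k + 1)) - Sum.elim (u₁ k) (p k)

/-- The semi-linear Lie splitting, with the interior equation and the boundary equation combined
into a single equation between bulk vectors. -/
structure IsLieSplitting (M A : Matrix (m ⊕ n) (m ⊕ n) ℝ) (MΓ AΓ : Matrix n n ℝ) (τ : ℝ)
    (fΩ : ℝ → (m ⊕ n → ℝ) → m ⊕ n → ℝ) (fΓ : ℝ → (n → ℝ) → n → ℝ)
    (u₁ : ℕ → m → ℝ) (p dtp : ℕ → n → ℝ) : Prop where
  dtp_succ (k : ℕ) : dtp (k + 1) = τ⁻¹ • (p (k + 1) - p k)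
  equation (k : ℕ) : M *ᵥ Sum.elim (τ⁻¹ • (u₁ (k + 1) - u₁ k)) (dtp k)
      + A *ᵥ Sum.elim (u₁ (k + 1)) (p k)
      + zeroExtend (MΓ *ᵥ dtp (k + 1) + AΓ *ᵥ p (k + 1))
    = fΩ ((k + 1) * τ) (Sum.elim (u₁ (k + 1)) (p k))
      + zeroExtend (fΓ ((k + 1) * τ) (p (k + 1)))

theorem isLieSplitting_of_blocks {M₁₁ A₁₁ : Matrix m m ℝ} {M₁₂ A₁₂ : Matrix m n ℝ}
    {M₂₁ A₂₁ : Matrix n m ℝ} {M₂₂ A₂₂ : Matrix n n ℝ}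
    (dtp_succ : ∀ k, dtp (k + 1) = τ⁻¹ • (p (k + 1) - p k))
    (interior : ∀ k : ℕ, M₁₁ *ᵥ (τ⁻¹ • (u₁ (k + 1) - u₁ k)) + A₁₁ *ᵥ u₁ (k + 1) =
      (fun i => fΩ ((k + 1) * τ) (Sum.elim (u₁ (k + 1)) (p k)) (Sum.inl i))
        - M₁₂ *ᵥ dtp k - A₁₂ *ᵥ p k)
    (boundary : ∀ k : ℕ, MΓ *ᵥ dtp (k + 1) + AΓ *ᵥ p (k + 1) =
      fΓ ((k + 1) * τ) (p (k + 1))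
        + (fun j => fΩ ((k + 1) * τ) (Sum.elim (u₁ (k + 1)) (p k)) (Sum.inr j))
        - M₂₂ *ᵥ dtp k - A₂₂ *ᵥ p k - M₂₁ *ᵥ (τ⁻¹ • (u₁ (k + 1) - u₁ k)) - A₂₁ *ᵥ u₁ (k + 1)) :
    IsLieSplitting (fromBlocks M₁₁ M₁₂ M₂₁ M₂₂) (fromBlocks A₁₁ A₁₂ A₂₁ A₂₂) MΓ AΓ τ fΩ fΓ
      u₁ p dtp where
  dtp_succ := dtp_succ
  equation k := by
    simp only [fromBlocks_mulVec, Sum.elim_comp_inl, Sum.elim_comp_inr, zeroExtend_apply]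
    ext (i | j)
    · have := congrFun (interior k) i
      simp only [Pi.add_apply, Pi.sub_apply, Sum.elim_inl, Pi.zero_apply] at this ⊢
      linear_combination this
    · have := congrFun (boundary k) j
      simp only [Pi.add_apply, Pi.sub_apply, Sum.elim_inr] at this ⊢
      linear_combination this

namespace IsLieSplitting

variable (hS : IsLieSplitting M A MΓ AΓ τ fΩ fΓ u₁ p dtp)

include hS

theorem boundary_increment (hτ : 0 < τ) (k : ℕ) :
    (p (k + 2) - p (k + 1)) - (p (k + 1) - p k) = τ • (dtp (k + 2) - dtp (k + 1)) := by
  rw [hS.dtp_succ, hS.dtp_succ, ← smul_sub, smul_inv_smul₀ hτ.ne']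

theorem bulkIncrement_sub_zeroExtend (hτ : 0 < τ) (k : ℕ) :
    bulkIncrement u₁ p (k + 1) - zeroExtend (τ • (dtp (k + 2) - dtp (k + 1))) =
      Sum.elim (u₁ (k + 2)) (p (k + 1)) - Sum.elim (u₁ (k + 1)) (p k) := by
  rw [← hS.boundary_increment hτ]
  ext (i | j) <;> simp [bulkIncrement, zeroExtend_apply]

theorem bulkIncrement_second_difference (hτ : 0 < τ) (k : ℕ) :
    bulkIncrement u₁ p (k + 1) - bulkIncrement u₁ p k
        - zeroExtend (τ • (dtp (k + 2) - dtp (k + 1))) + zeroExtend (τ • (dtp (k + 1) - dtp k)) =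
      τ • (Sum.elim (τ⁻¹ • (u₁ (k + 2) - u₁ (k + 1))) (dtp (k + 1))
        - Sum.elim (τ⁻¹ • (u₁ (k + 1) - u₁ k)) (dtp k)) := by
  rw [← hS.boundary_increment hτ]
  ext (i | j)
  · simp [bulkIncrement, zeroExtend_apply, ← mul_sub, hτ.ne']
  · simp [bulkIncrement, zeroExtend_apply]

theorem differenced_equation (hτ : 0 < τ) (k : ℕ) :
    M *ᵥ (bulkIncrement u₁ p (k + 1) - bulkIncrement u₁ p k
        - zeroExtend (τ • (dtp (k + 2) - dtp (k + 1))) + zeroExtend (τ • (dtp (k + 1) - dtp k)))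
      + τ • A *ᵥ (bulkIncrement u₁ p (k + 1) - zeroExtend (τ • (dtp (k + 2) - dtp (k + 1))))
      + zeroExtend
        (MΓ *ᵥ (τ • (dtp (k + 2) - dtp (k + 1))) + τ • AΓ *ᵥ (p (k + 2) - p (k + 1)))
    = τ • (fΩ ((↑(k + 1) + 1) * τ) (Sum.elim (u₁ (k + 2)) (p (k + 1)))
        - fΩ ((k + 1) * τ) (Sum.elim (u₁ (k + 1)) (p k)))
      + zeroExtend
        (τ • (fΓ ((↑(k + 1) + 1) * τ) (p (k + 2)) - fΓ ((k + 1) * τ) (p (k + 1)))) := by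
  have difference := congrArg (τ • ·) (congrArg₂ (· - ·) (hS.equation (k + 1)) (hS.equation k))
  rw [hS.bulkIncrement_second_difference hτ, hS.bulkIncrement_sub_zeroExtend hτ]
  simp only [mulVec_sub, mulVec_smul, map_sub, map_add, map_smul] at difference ⊢
  refine Eq.trans ?_ (difference.trans ?_) <;> module

end IsLieSplitting

variable [DecidableEq m] [DecidableEq n]

/-- The forms of the Lie splitting. The stiffness forms carry the time step, so that all forms have
the same scaling. -/
noncomputable def splittingForms (hM : M.PosSemidef) (hA : A.PosSemidef) (hMΓ : MΓ.PosSemidef)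
    (hAΓ : AΓ.PosSemidef) (hτ : 0 ≤ τ) : CoupledForms (m ⊕ n → ℝ) (n → ℝ) where
  stiff := τ • A.toBilin'
  mass := M.toBilin'
  bdryStiff := τ • AΓ.toBilin'
  bdryMass := MΓ.toBilin'
  incl := zeroExtend
  stiff_psd := (toBilin'_isPosSemidef hA).smul hτ
  mass_psd := toBilin'_isPosSemidef hM
  bdryStiff_psd := (toBilin'_isPosSemidef hAΓ).smul hτ
  bdryMass_psd := toBilin'_isPosSemidef hMΓ

theorem energy_splittingForms (hM : M.PosSemidef) (hA : A.PosSemidef) (hMΓ : MΓ.PosSemidef)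
    (hAΓ : AΓ.PosSemidef) (hτ : 0 ≤ τ) (ρ σ : ℝ) (u : m ⊕ n → ℝ) (q d : n → ℝ) :
    (splittingForms hM hA hMΓ hAΓ hτ).energy (τ * ρ) (τ * σ) u q (τ • d) =
      τ * (vecNormSq (A + ρ • M) u + vecNormSq (AΓ + σ • MΓ) q
        + 2 * τ * vecNormSq M (zeroExtend d)) := by
  simp only [CoupledForms.energy, splittingForms, LinearMap.smul_apply, toBilin'_self,
    vecNormSq_add_smul, map_smul, smul_eq_mul]
  ring

namespace IsLieSplitting

theorem tested_equation (hS : IsLieSplitting M A MΓ AΓ τ fΩ fΓ u₁ p dtp) (hM : M.PosSemidef)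
    (hA : A.PosSemidef) (hMΓ : MΓ.PosSemidef) (hAΓ : AΓ.PosSemidef) (hτ : 0 < τ) (k : ℕ)
    {x U : m ⊕ n → ℝ} {a a' : n → ℝ} (hU : bulkIncrement u₁ p (k + 1) = U)
    (hx : U - bulkIncrement u₁ p k = x)
    (ha : τ • (dtp (k + 1) - dtp k) = a) (ha' : τ • (dtp (k + 2) - dtp (k + 1)) = a') :
    M.toBilin' (x - zeroExtend a' + zeroExtend a) x + τ * A.toBilin' (U - zeroExtend a') x
        + MΓ.toBilin' a' a' + τ * AΓ.toBilin' (p (k + 2) - p (k + 1)) a' =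
      x ⬝ᵥ τ • (fΩ ((↑(k + 1) + 1) * τ) (Sum.elim (u₁ (k + 2)) (p (k + 1)))
          - fΩ ((k + 1) * τ) (Sum.elim (u₁ (k + 1)) (p k)))
        + a' ⬝ᵥ τ • (fΓ ((↑(k + 1) + 1) * τ) (p (k + 2)) - fΓ ((k + 1) * τ) (p (k + 1))) := by
  have boundary_part : x ∘ Sum.inr = a' := by
    rw [← hx, ← hU, ← ha', ← hS.boundary_increment hτ]
    rfl
  have equation := congrArg (x ⬝ᵥ ·) (hS.differenced_equation hτ k)
  simp only [dotProduct_add, dotProduct_zeroExtend, boundary_part, hU, hx, ha, ha'] at equation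
  rw [← equation, dotProduct_smul, dotProduct_smul]
  simp only [toBilin'_apply_eq_swap hM _ x, toBilin'_apply_eq_swap hA _ x,
    toBilin'_apply_eq_swap hMΓ _ a', toBilin'_apply_eq_swap hAΓ _ a', smul_eq_mul]
  ring

theorem isStep (hS : IsLieSplitting M A MΓ AΓ τ fΩ fΓ u₁ p dtp) (hM : M.PosDef)
    (hA : A.PosSemidef) (hMΓ : MΓ.PosDef) (hAΓ : AΓ.PosSemidef) (hτ : 0 < τ)
    {C LΩ LA LM LΓ LAΓ LMΓ : ℝ} (hLM : 0 ≤ LM) (hLMΓ : 0 ≤ LMΓ)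
    (hLA : 2 * LA ≤ C) (hLAΓ : LAΓ ≤ C)
    (hfΩ : IsSourceLipschitz M A fΩ LΩ LA LM) (hfΓ : IsSourceLipschitz MΓ AΓ fΓ LΓ LAΓ LMΓ)
    (k : ℕ) :
    ∃ φ ψ, (splittingForms hM.posSemidef hA hMΓ.posSemidef hAΓ hτ.le).IsStep (τ * C)
      (τ * Real.sqrt (2 * LM)) (τ * Real.sqrt LMΓ) (LΩ * τ ^ 4) (LΓ * τ ^ 4) φ ψ
      (bulkIncrement u₁ p k) (bulkIncrement u₁ p (k + 1)) (p (k + 1) - p k)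
      (p (k + 2) - p (k + 1)) (τ • (dtp (k + 1) - dtp k)) (τ • (dtp (k + 2) - dtp (k + 1))) := by
  have time_step : |(↑(k + 1) + 1) * τ - (k + 1) * τ| = τ := by
    rw [show (↑(k + 1) + 1) * τ - (k + 1) * τ = τ by push_cast; ring, abs_of_pos hτ]
  refine ⟨_, _, hS.boundary_increment hτ k, hS.tested_equation hM.posSemidef hA hMΓ.posSemidef
    hAΓ hτ k rfl rfl rfl rfl, fun s => ?_, fun s => ?_⟩
  · convert hfΩ.two_mul_dotProduct_le hM hA (by linarith : LA ≤ C / 2) time_step s _ _ _ using 1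
    simp only [splittingForms, hS.bulkIncrement_sub_zeroExtend hτ, LinearMap.smul_apply,
      toBilin'_self, smul_eq_mul, mul_pow, Real.sq_sqrt (by positivity : 0 ≤ 2 * LM)]
    ring
  · convert hfΓ.two_mul_dotProduct_le hMΓ hAΓ hLAΓ time_step s _ _ _ using 1
    simp only [splittingForms, LinearMap.smul_apply, toBilin'_self, smul_eq_mul, mul_pow,
      Real.sq_sqrt hLMΓ]

theorem sum_vecNormSq_le (hS : IsLieSplitting M A MΓ AΓ τ fΩ fΓ u₁ p dtp) (hM : M.PosDef)
    (hA : A.PosSemidef) (hMΓ : MΓ.PosDef) (hAΓ : AΓ.PosSemidef) (hτ : 0 < τ)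
    {C LΩ LA LM LΓ LAΓ LMΓ K B : ℝ} (hLΩ : 0 ≤ LΩ) (hLΓ : 0 ≤ LΓ) (hLM : 0 ≤ LM)
    (hLMΓ : 0 ≤ LMΓ) (hK : 0 ≤ K) (hB : 0 ≤ B)
    (hLA : 2 * LA ≤ C) (hLM' : Real.sqrt (8 * LM) ≤ C) (hLAΓ : LAΓ ≤ C)
    (hLMΓ' : 2 * Real.sqrt LMΓ ≤ C) (hCτ : τ * C ≤ 1 / 2)
    (hstiff : ∀ a, τ * vecNormSq A (zeroExtend a) ≤ K * vecNormSq MΓ a)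
    (hmass : ∀ a, vecNormSq M (zeroExtend a) ≤ B * vecNormSq MΓ a)
    (hfΩ : IsSourceLipschitz M A fΩ LΩ LA LM) (hfΓ : IsSourceLipschitz MΓ AΓ fΓ LΓ LAΓ LMΓ)
    (N : ℕ) :
    τ * ((1 - K - 4 * B) * ∑ k ∈ range N, vecNormSq MΓ (dtp (k + 2) - dtp (k + 1))) ≤
      Real.exp (2 * (N * τ) * C) *
        (vecNormSq (A + Real.sqrt (2 * LM) • M) (bulkIncrement u₁ p 0)
          + vecNormSq (AΓ + Real.sqrt LMΓ • MΓ) (p 1 - p 0)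
          + 2 * τ * vecNormSq M (zeroExtend (dtp 1 - dtp 0))
          + 2 * (LΩ + LΓ) * τ ^ 2 * ∑ k ∈ range N, Real.exp (-(2 * (k * τ) * C)) * τ) := by
  choose φ ψ step using hS.isStep hM hA hMΓ hAΓ hτ hLM hLMΓ hLA hLAΓ hfΩ hfΓ
  have hC : 0 ≤ C := (Real.sqrt_nonneg _).trans hLM'
  rw [show 8 * LM = 2 ^ 2 * (2 * LM) by ring, Real.sqrt_mul (by positivity),
    Real.sqrt_sq two_pos.le] at hLM'
  have bound := CoupledForms.sum_bdryMass_le _ (by positivity) hCτ hK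
    (mul_nonneg four_pos.le hB)
    (fun a => by
      simpa only [splittingForms, LinearMap.smul_apply, toBilin'_self, smul_eq_mul] using hstiff a)
    (fun a => by
      simpa only [splittingForms, toBilin'_self, mul_assoc] using
        mul_le_mul_of_nonneg_left (hmass a) four_pos.le)
    (by positivity) (by nlinarith : τ * Real.sqrt (2 * LM) ≤ τ * C / 2) (by positivity)
    (by nlinarith : τ * Real.sqrt LMΓ ≤ τ * C / 2) (by positivity) (by positivity) step N
  rw [energy_splittingForms] at bound
  simp only [splittingForms, toBilin'_self, vecNormSq_smul, ← mul_sum, zero_add,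
    exp_two_mul_pow, ← Real.exp_neg] at bound
  refine le_of_mul_le_mul_left ?_ hτ
  rw [← sum_mul]
  linear_combination bound

end IsLieSplitting

end LieSplitting

theorem sum_Icc_mul_le_mul_sum_range {w w' : ℝ} (hw : w ≤ w') {x : ℕ → ℝ} (hx : ∀ k, 0 ≤ x k)
    (n : ℕ) : ∑ k ∈ Icc 1 n, w * x k ≤ w' * ∑ k ∈ range n, x (k + 1) := by
  calc ∑ k ∈ Icc 1 n, w * x k ≤ ∑ k ∈ Icc 1 n, w' * x k :=
        sum_le_sum fun k _ => mul_le_mul_of_nonneg_right hw (hx k)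
    _ = w' * ∑ k ∈ range n, x (k + 1) := by
        rw [← mul_sum, ← Ico_add_one_right_eq_Icc, sum_Ico_eq_sum_range, Nat.add_sub_cancel]
        simp only [add_comm 1]

theorem stiffness_le_of_inverse_estimate {a m mΓ τ h cM cinv αΩ : ℝ} (hτ : 0 ≤ τ) (hh : 0 < h)
    (hcinv : 0 ≤ cinv) (hαΩ : 0 ≤ αΩ) (hmass : m ≤ cM * h * mΓ)
    (hinv : a ≤ (αΩ + cinv / h ^ 2) * m) :
    τ * a ≤ (cM * αΩ * τ * h + cM * cinv * τ / h) * mΓ := by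
  calc τ * a ≤ τ * ((αΩ + cinv / h ^ 2) * (cM * h * mΓ)) := by
        gcongr
        exact hinv.trans (by gcongr)
    _ = (cM * αΩ * τ * h + cM * cinv * τ / h) * mΓ := by
        field_simp

theorem lie_splitting_stability_semilinear_general
    {m n : Type*} [Fintype m] [Fintype n] [DecidableEq m] [DecidableEq n]
    {M₁₁ A₁₁ : Matrix m m ℝ} {M₁₂ A₁₂ : Matrix m n ℝ} {M₂₁ A₂₁ : Matrix n m ℝ}
    {M₂₂ A₂₂ MΓ AΓ : Matrix n n ℝ}
    (hM : (fromBlocks M₁₁ M₁₂ M₂₁ M₂₂).PosDef) (hA : (fromBlocks A₁₁ A₁₂ A₂₁ A₂₂).PosSemidef)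
    (hMΓ : MΓ.PosDef) (hAΓ : AΓ.PosSemidef)
    {τ h cM cinv αΩ : ℝ} (hτ : 0 < τ) (hh : 0 < h) (hcM : 0 ≤ cM) (hcinv : 0 ≤ cinv)
    (hαΩ : 0 ≤ αΩ) (hmass : ∀ z, vecNormSq M₂₂ z ≤ cM * h * vecNormSq MΓ z)
    (hinv : ∀ z, vecNormSq A₂₂ z ≤ (αΩ + cinv / h ^ 2) * vecNormSq M₂₂ z)
    {fΩ : ℝ → (m ⊕ n → ℝ) → m ⊕ n → ℝ} {fΓ : ℝ → (n → ℝ) → n → ℝ}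
    {LΩ LA LM LΓ LAΓ LMΓ : ℝ} (hLΩ : 0 ≤ LΩ) (hLA : 0 ≤ LA) (hLM : 0 ≤ LM) (hLΓ : 0 ≤ LΓ)
    (hLMΓ : 0 ≤ LMΓ)
    (hLipΩ : IsSourceLipschitz (fromBlocks M₁₁ M₁₂ M₂₁ M₂₂) (fromBlocks A₁₁ A₁₂ A₂₁ A₂₂) fΩ
      LΩ LA LM)
    (hLipΓ : IsSourceLipschitz MΓ AΓ fΓ LΓ LAΓ LMΓ)
    (hstep : max (max (2 * LA) √(8 * LM)) (max LAΓ (2 * √LMΓ)) ≤ 1 / (2 * τ))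
    {u₁ : ℕ → m → ℝ} {p dtp : ℕ → n → ℝ} (hdtp : ∀ k, dtp (k + 1) = τ⁻¹ • (p (k + 1) - p k))
    (interior : ∀ k : ℕ, M₁₁ *ᵥ (τ⁻¹ • (u₁ (k + 1) - u₁ k)) + A₁₁ *ᵥ u₁ (k + 1) =
      (fun i => fΩ ((k + 1) * τ) (Sum.elim (u₁ (k + 1)) (p k)) (Sum.inl i))
        - M₁₂ *ᵥ dtp k - A₁₂ *ᵥ p k)
    (boundary : ∀ k : ℕ, MΓ *ᵥ dtp (k + 1) + AΓ *ᵥ p (k + 1) =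
      fΓ ((k + 1) * τ) (p (k + 1))
        + (fun j => fΩ ((k + 1) * τ) (Sum.elim (u₁ (k + 1)) (p k)) (Sum.inr j))
        - M₂₂ *ᵥ dtp k - A₂₂ *ᵥ p k - M₂₁ *ᵥ (τ⁻¹ • (u₁ (k + 1) - u₁ k)) - A₂₁ *ᵥ u₁ (k + 1))
    (N : ℕ) :
    τ * ∑ k ∈ Icc 1 N,
        (1 - cM * h * (4 + 4 * τ ^ 2 * LM)
            - (cM * αΩ * τ * h + cM * cinv * τ / h) * (1 + 4 * τ ^ 2 * LA))
          * vecNormSq MΓ (dtp (k + 1) - dtp k)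
      ≤ Real.exp (2 * (N * τ) * max (max (2 * LA) √(8 * LM)) (max LAΓ (2 * √LMΓ)))
          * (vecNormSq (fromBlocks A₁₁ A₁₂ A₂₁ A₂₂
                + etaConst LA LM • fromBlocks M₁₁ M₁₂ M₂₁ M₂₂)
              (Sum.elim (u₁ 1) (p 1) - Sum.elim (u₁ 0) (p 0))
            + vecNormSq (AΓ + etaConst (LAΓ / 2) (LMΓ / 2) • MΓ) (p 1 - p 0)
            + 2 * τ * vecNormSq M₂₂ (dtp 1 - dtp 0)
            + 2 * (LΩ + LΓ) * τ ^ 2 * ∑ k ∈ range N,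
                Real.exp (-(2 * (k * τ)
                    * max (max (2 * LA) √(8 * LM)) (max LAΓ (2 * √LMΓ)))) * τ) := by
  set C := max (max (2 * LA) √(8 * LM)) (max LAΓ (2 * √LMΓ)) with hC
  set K := cM * αΩ * τ * h + cM * cinv * τ / h
  have hK : 0 ≤ K := by positivity
  have hB : 0 ≤ cM * h := by positivity
  have weight : 1 - cM * h * (4 + 4 * τ ^ 2 * LM) - K * (1 + 4 * τ ^ 2 * LA)
      ≤ 1 - K - 4 * (cM * h) := by
    linarith [show 0 ≤ cM * h * (4 * τ ^ 2 * LM) by positivity,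
      show 0 ≤ K * (4 * τ ^ 2 * LA) by positivity]
  have step_size : τ * C ≤ 1 / 2 := by
    calc τ * C ≤ τ * (1 / (2 * τ)) := by gcongr
      _ = 1 / 2 := by field_simp
  have mass_le : ∀ z, vecNormSq (fromBlocks M₁₁ M₁₂ M₂₁ M₂₂) (zeroExtend z)
      ≤ cM * h * vecNormSq MΓ z := by
    simpa only [vecNormSq_fromBlocks_zeroExtend] using hmass
  have stiffness_le : ∀ z, τ * vecNormSq (fromBlocks A₁₁ A₁₂ A₂₁ A₂₂) (zeroExtend z)
      ≤ K * vecNormSq MΓ z := by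
    simpa only [vecNormSq_fromBlocks_zeroExtend] using
      fun z => stiffness_le_of_inverse_estimate hτ.le hh hcinv hαΩ (hmass z) (hinv z)
  have bound := (isLieSplitting_of_blocks hdtp interior boundary).sum_vecNormSq_le hM hA hMΓ hAΓ hτ
    hLΩ hLΓ hLM hLMΓ hK hB (by simp [hC]) (by simp [hC]) (by simp [hC]) (by simp [hC])
    step_size stiffness_le mass_le hLipΩ hLipΓ N
  have bulk_weight := vecNormSq_add_smul_mono hM.posSemidef (fromBlocks A₁₁ A₁₂ A₂₁ A₂₂)
    (sqrt_two_mul_le_etaConst LA LM) (Sum.elim (u₁ 1) (p 1) - Sum.elim (u₁ 0) (p 0))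
  have boundary_weight := vecNormSq_add_smul_mono hMΓ.posSemidef AΓ
    (sqrt_two_mul_le_etaConst (LAΓ / 2) (LMΓ / 2)) (p 1 - p 0)
  rw [mul_div_cancel₀ LMΓ two_ne_zero] at boundary_weight
  rw [vecNormSq_fromBlocks_zeroExtend, bulkIncrement] at bound
  have weighted := mul_le_mul_of_nonneg_left (sum_Icc_mul_le_mul_sum_range weight
    (fun k => vecNormSq_nonneg hMΓ.posSemidef (dtp (k + 1) - dtp k)) N) hτ.le
  refine weighted.trans (bound.trans (mul_le_mul_of_nonneg_left ?_ (Real.exp_pos _).le))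
  linear_combination bulk_weight + boundary_weight

/-- **Stability of the Lie splitting for semi-linear problems (Lemma A.1).** -/
theorem lie_splitting_stability_semilinear
    (N₁ N₂ : ℕ) (hN₁ : 0 < N₁) (hN₂ : 0 < N₂)
    (M₁₁ A₁₁ : Matrix (Fin N₁) (Fin N₁) ℝ)
    (M₁₂ A₁₂ : Matrix (Fin N₁) (Fin N₂) ℝ)
    (M₂₁ A₂₁ : Matrix (Fin N₂) (Fin N₁) ℝ)
    (M₂₂ A₂₂ MΓ AΓ : Matrix (Fin N₂) (Fin N₂) ℝ)
    (hM : (Matrix.fromBlocks M₁₁ M₁₂ M₂₁ M₂₂).PosDef)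
    (hA : (Matrix.fromBlocks A₁₁ A₁₂ A₂₁ A₂₂).PosSemidef)
    (hM21 : M₂₁ = M₁₂ᵀ) (hA21 : A₂₁ = A₁₂ᵀ)
    (hMΓ : MΓ.PosDef) (hAΓ : AΓ.PosSemidef)
    -- constants
    (τ h cM cinv αΩ : ℝ)
    (hτ : 0 < τ) (hh : 0 < h) (hcM : 0 < cM) (hcinv : 0 < cinv) (hαΩ : 0 ≤ αΩ)
    -- boundary mass estimate and inverse estimate
    (hmass : ∀ z : Fin N₂ → ℝ, vecNormSq M₂₂ z ≤ cM * h * vecNormSq MΓ z)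
    (hinv : ∀ z : Fin N₂ → ℝ, vecNormSq A₂₂ z ≤ (αΩ + cinv / h ^ 2) * vecNormSq M₂₂ z)
    -- weak CFL condition
    (hCFL : 7 * cinv * cM * τ < 3 * h)
    -- the semi-linear right-hand sides and their Lipschitz constants
    (fΩ : ℝ → (Fin N₁ ⊕ Fin N₂ → ℝ) → (Fin N₁ ⊕ Fin N₂ → ℝ))
    (fΓ : ℝ → (Fin N₂ → ℝ) → (Fin N₂ → ℝ))
    (LΩ LA LM LΓ LAΓ LMΓ : ℝ)
    (hLΩ : 0 ≤ LΩ) (hLA : 0 ≤ LA) (hLM : 0 ≤ LM)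
    (hLΓ : 0 ≤ LΓ) (hLAΓ : 0 ≤ LAΓ) (hLMΓ : 0 ≤ LMΓ)
    (hLipΩ : ∀ (t t' : ℝ) (u u' : Fin N₁ ⊕ Fin N₂ → ℝ),
      vecNormSq (Matrix.fromBlocks M₁₁ M₁₂ M₂₁ M₂₂)⁻¹ (fΩ t u - fΩ t' u') ≤
        LΩ * |t - t'| ^ 2
          + LA * vecNormSq (Matrix.fromBlocks A₁₁ A₁₂ A₂₁ A₂₂) (u - u')
          + LM * vecNormSq (Matrix.fromBlocks M₁₁ M₁₂ M₂₁ M₂₂) (u - u'))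
    (hLipΓ : ∀ (t t' : ℝ) (q q' : Fin N₂ → ℝ),
      vecNormSq MΓ⁻¹ (fΓ t q - fΓ t' q') ≤
        LΓ * |t - t'| ^ 2 + LAΓ * vecNormSq AΓ (q - q') + LMΓ * vecNormSq MΓ (q - q'))
    -- step-size restriction 1/(2τ) > C
    (hstep : 1 / (2 * τ) >
      max (max (2 * LA) (Real.sqrt (8 * LM))) (max LAΓ (2 * Real.sqrt LMΓ)))
    -- the discrete sequences
    (u₁ : ℕ → Fin N₁ → ℝ) (p dtp : ℕ → Fin N₂ → ℝ)
    (hdtp : ∀ n : ℕ, dtp (n + 1) = τ⁻¹ • (p (n + 1) - p n))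
    -- the semi-linear Lie splitting scheme
    (hscheme₁ : ∀ n : ℕ,
      M₁₁.mulVec (τ⁻¹ • (u₁ (n + 1) - u₁ n)) + A₁₁.mulVec (u₁ (n + 1)) =
        (fun i => fΩ ((n + 1) * τ) (Sum.elim (u₁ (n + 1)) (p n)) (Sum.inl i))
          - M₁₂.mulVec (dtp n) - A₁₂.mulVec (p n))
    (hscheme₂ : ∀ n : ℕ,
      MΓ.mulVec (dtp (n + 1)) + AΓ.mulVec (p (n + 1)) =
        fΓ ((n + 1) * τ) (p (n + 1))
          + (fun j => fΩ ((n + 1) * τ) (Sum.elim (u₁ (n + 1)) (p n)) (Sum.inr j))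
          - M₂₂.mulVec (dtp n) - A₂₂.mulVec (p n)
          - M₂₁.mulVec (τ⁻¹ • (u₁ (n + 1) - u₁ n)) - A₂₁.mulVec (u₁ (n + 1))) :
    ∀ n : ℕ, 1 ≤ n →
      τ * ∑ k ∈ Finset.Icc 1 n,
          (1 - cM * h * (4 + 4 * τ ^ 2 * LM)
              - ((cM * αΩ) * τ * h + (cM * cinv) * τ / h) * (1 + 4 * τ ^ 2 * LA))
            * vecNormSq MΓ (dtp (k + 1) - dtp k)
      ≤ Real.exp (2 * ((n : ℝ) * τ)
            * max (max (2 * LA) (Real.sqrt (8 * LM))) (max LAΓ (2 * Real.sqrt LMΓ)))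
          * (vecNormSq
                (Matrix.fromBlocks A₁₁ A₁₂ A₂₁ A₂₂
                  + etaConst LA LM • Matrix.fromBlocks M₁₁ M₁₂ M₂₁ M₂₂)
                (Sum.elim (u₁ 1) (p 1) - Sum.elim (u₁ 0) (p 0))
            + vecNormSq (AΓ + etaConst (LAΓ / 2) (LMΓ / 2) • MΓ) (p 1 - p 0)
            + 2 * τ * vecNormSq M₂₂ (dtp 1 - dtp 0)
            + 2 * (LΩ + LΓ) * τ ^ 2 * ∑ k ∈ Finset.range n,
                Real.exp (-(2 * ((k : ℝ) * τ)
                    * max (max (2 * LA) (Real.sqrt (8 * LM)))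
                        (max LAΓ (2 * Real.sqrt LMΓ)))) * τ) := by
  exact fun n _ => lie_splitting_stability_semilinear_general hM hA hMΓ hAΓ hτ hh hcM.le hcinv.le
    hαΩ hmass hinv hLΩ hLA hLM hLΓ hLMΓ hLipΩ hLipΓ hstep.le hdtp hscheme₁ hscheme₂ n
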